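/- If K is a regular n-polytope that is (1, n−1)-flat, then no finite chiral (n+1)-polytope has a facet isomorphic to K. -/

import Mathlib

open scoped Classical

/-- An abstract polytope of rank `n`: a partially ordered set with a unique minimal
element (of rank `-1`) and a unique maximal element (of rank `n`), all of whose
maximal chains (flags) have exactly `n + 2` elements, equipped with the induced
rank function, satisfying the diamond condition and strong connectivity. -/
structure AbstractPolytope (n : ℕ) where
  Face : Type
  [instPartialOrder : PartialOrder Face]
  rank : Face → ℤ
  bot : Face
  top : Face
  bot_le : ∀ F : Face, bot ≤ F
  le_top : ∀ F : Face, F ≤ top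
  rank_bot : rank bot = -1
  rank_top : rank top = n
  rank_strictMono : ∀ F G : Face, F < G → rank F < rank G
  flag_card : ∀ Φ : Flag Face, Nat.card Φ = n + 2
  flag_ranks : ∀ (Φ : Flag Face) (j : ℤ), -1 ≤ j → j ≤ (n : ℤ) →
    ∃ F ∈ Φ, rank F = j
  diamond : ∀ F G : Face, F < G → rank G = rank F + 2 →
    Nat.card {H : Face // F < H ∧ H < G} = 2
  strongly_connected : ∀ F G : Face, F < G → rank F + 3 ≤ rank G →
    ∀ H H' : Face, F < H → H < G → F < H' → H' < G →
    Relation.ReflTransGen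
      (fun A B : Face => F < A ∧ A < G ∧ F < B ∧ B < G ∧ (A ≤ B ∨ B ≤ A)) H H'

attribute [instance] AbstractPolytope.instPartialOrder

namespace AbstractPolytope

variable {n : ℕ} (P : AbstractPolytope n)

/-- The number of flags of `P`. -/
noncomputable def numFlags : ℕ := Nat.card (Flag P.Face)

/-- A vertex is a face of rank `0`. -/
def IsVertex (F : P.Face) : Prop := P.rank F = 0

/-- A facet is a face of rank `n - 1`. -/
def IsFacet (F : P.Face) : Prop := P.rank F = (n : ℤ) - 1

/-- The number of vertices of `P`. -/
noncomputable def numVertices : ℕ := Nat.card {F : P.Face // P.IsVertex F}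

/-- The number of facets of `P`. -/
noncomputable def numFacets : ℕ := Nat.card {F : P.Face // P.IsFacet F}

/-- Two faces are incident when they are comparable. -/
def Incident (F G : P.Face) : Prop := F ≤ G ∨ G ≤ F

/-- `P` is `(k, m)`-flat when every face of rank `k` is incident with every face of
rank `m`. -/
def IsKMFlat (k m : ℤ) : Prop :=
  ∀ F G : P.Face, P.rank F = k → P.rank G = m → P.Incident F G

/-- `P` is flat when every vertex is incident with every facet. -/
def IsFlat : Prop := P.IsKMFlat 0 ((n : ℤ) - 1)

/-- Two flags are adjacent when they differ in exactly one element. -/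
def AdjacentFlags (Φ Ψ : Flag P.Face) : Prop :=
  Φ ≠ Ψ ∧ ((Φ : Set P.Face) \ (Ψ : Set P.Face)).ncard = 1 ∧
    ((Ψ : Set P.Face) \ (Φ : Set P.Face)).ncard = 1

/-- Two flags lie in the same orbit of the automorphism group `Γ(P)` (the group of
order automorphisms of `P`). -/
def SameOrbit (Φ Ψ : Flag P.Face) : Prop :=
  ∃ f : P.Face ≃o P.Face, f '' (Φ : Set P.Face) = (Ψ : Set P.Face)

/-- `P` is regular when `Γ(P)` is transitive on flags. -/
def IsRegular : Prop := ∀ Φ Ψ : Flag P.Face, P.SameOrbit Φ Ψ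

/-- `P` is chiral when its flags fall into exactly two orbits under `Γ(P)` and
adjacent flags always lie in different orbits. -/
def IsChiral : Prop :=
  (∃ Φ₁ Φ₂ : Flag P.Face, ¬ P.SameOrbit Φ₁ Φ₂ ∧
      ∀ Φ : Flag P.Face, P.SameOrbit Φ Φ₁ ∨ P.SameOrbit Φ Φ₂) ∧
  ∀ Φ Ψ : Flag P.Face, P.AdjacentFlags Φ Ψ → ¬ P.SameOrbit Φ Ψ

/-- The polytope `Q` is (isomorphic to) the section `G/F` of `P`: there is an order
isomorphism from `Q` onto the interval `[F, G]` of `P`, shifting ranks by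
`rank F + 1`. -/
def IsSection {m : ℕ} (Q : AbstractPolytope m) (F G : P.Face) : Prop :=
  F ≤ G ∧ ∃ e : Q.Face ≃o (Set.Icc F G),
    ∀ x : Q.Face, P.rank (e x : P.Face) = Q.rank x + P.rank F + 1

/-- `P` is equivelar of Schläfli type `{p 1, …, p (n-1)}`: every section between a
face of rank `i - 2` and a face of rank `i + 1` is a polygon with exactly `p i`
vertices (i.e. it contains exactly `p i` faces of rank `i - 1`). -/
def IsSchlafli (p : ℕ → ℕ) : Prop :=
  ∀ i : ℕ, 1 ≤ i → i ≤ n - 1 →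
    ∀ F G : P.Face, F < G → P.rank F = (i : ℤ) - 2 → P.rank G = (i : ℤ) + 1 →
      Nat.card {H : P.Face // F < H ∧ H < G ∧ P.rank H = (i : ℤ) - 1} = p i

/-- `P` is tight of type `{p 1, …, p (n-1)}`: it is equivelar of that type and has
exactly `2 p₁ ⋯ p_{n-1}` flags. -/
def IsTight (p : ℕ → ℕ) : Prop :=
  P.IsSchlafli p ∧ P.numFlags = 2 * ∏ i ∈ Finset.Icc 1 (n - 1), p i

end AbstractPolytope

/-!
Let `e` be an edge of one facet of `P`. Chirality already makes all facets of `P` isomorphic to the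
regular polytope `K`, and flatness spreads `e` from one facet to each facet sharing a ridge with
it, so `e` lies below every facet and, by flatness again, below every ridge. In each facet `G`
regularity provides the automorphism of `G` exchanging the two vertices of `e` and fixing `G/e`.
On a ridge shared by two facets both automorphisms restrict to one exchanging the vertices of `e`
and fixing the faces above `e`, and rigidity leaves only one such map. Hence they glue to an
automorphism of `P` taking a flag to an adjacent one, which chirality forbids. In ranks `1` and `2`
there is no room for this argument, and every polytope is regular.
-/

theorem exists_orderIso_of_proper_cover {α ι : Type*} [PartialOrder α] [BoundedOrder α]
    {c : ι → α} {ρ : ι → ι} (hρ : Function.Involutive ρ)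
    (hle : ∀ i j, c i ≤ c j → c (ρ i) ≤ c (ρ j))
    (hbot : ∀ i, c i = ⊥ → c (ρ i) = ⊥) (htop : ∀ i, c i = ⊤ → c (ρ i) = ⊤)
    (hcover : ∀ x, x ≠ ⊥ → x ≠ ⊤ → x ∈ Set.range c) :
    ∃ f : α ≃o α, ∀ i, f (c i) = c (ρ i) := by
  let f : α → α := Function.extend c (c ∘ ρ) id
  have hf : ∀ i, f (c i) = c (ρ i) :=
    Function.FactorsThrough.extend_apply
      (fun i j hij => (hle i j hij.le).antisymm (hle j i hij.ge)) id
  have hf' : ∀ x ∉ Set.range c, f x = x := fun x hx => Function.extend_apply' _ _ x hx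
  have hfix : ∀ b, (∀ i, c i = b → c (ρ i) = b) → f b = b := by
    intro b hb
    by_cases hmem : b ∈ Set.range c
    · obtain ⟨i, rfl⟩ := hmem
      rw [hf, hb i rfl]
    · exact hf' b hmem
  have hinv : Function.Involutive f := by
    intro x
    by_cases hx : x ∈ Set.range c
    · obtain ⟨i, rfl⟩ := hx
      rw [hf, hf, hρ]
    · rw [hf' x hx, hf' x hx]
  have hmono : Monotone f := by
    intro a b hab
    by_cases ha : a = ⊥
    · rw [ha, hfix ⊥ hbot]
      exact bot_le
    by_cases hb : b = ⊤
    · rw [hb, hfix ⊤ htop]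
      exact le_top
    obtain ⟨i, rfl⟩ := hcover a ha (ne_top_of_le_ne_top hb hab)
    obtain ⟨j, rfl⟩ := hcover b (ne_bot_of_le_ne_bot ha hab) hb
    rw [hf, hf]
    exact hle i j hab
  exact ⟨(hinv.toPerm f).toOrderIso hmono hmono, hf⟩

theorem zpow_apply_zpow_apply {α : Type*} [LE α] (s : α ≃o α) (i j : ℤ) (x : α) :
    (s ^ i) ((s ^ j) x) = (s ^ (i + j)) x := by rw [zpow_add, RelIso.mul_apply]

theorem zpow_apply_apply {α : Type*} [LE α] (s : α ≃o α) (i : ℤ) (x : α) :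
    (s ^ i) (s x) = (s ^ (i + 1)) x := by
  rw [zpow_add_one, RelIso.mul_apply]

namespace AbstractPolytope

section Rank

variable {n : ℕ} (P : AbstractPolytope n)

instance : BoundedOrder P.Face where
  bot := P.bot
  bot_le := P.bot_le
  top := P.top
  le_top := P.le_top

theorem rank_bot_eq : P.rank ⊥ = -1 := P.rank_bot

theorem rank_top_eq : P.rank ⊤ = n := P.rank_top

theorem strictMono_rank : StrictMono P.rank := fun F G => P.rank_strictMono F G

theorem bot_ne_top : (⊥ : P.Face) ≠ ⊤ := fun h => by
  have := congrArg P.rank h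
  rw [P.rank_bot_eq, P.rank_top_eq] at this
  omega

theorem neg_one_le_rank (x : P.Face) : -1 ≤ P.rank x :=
  P.rank_bot_eq ▸ P.strictMono_rank.monotone _root_.bot_le

theorem rank_le (x : P.Face) : P.rank x ≤ n :=
  P.rank_top_eq ▸ P.strictMono_rank.monotone _root_.le_top

variable {P}

theorem rank_nonneg {x : P.Face} (hx : x ≠ ⊥) : 0 ≤ P.rank x := by
  have := P.strictMono_rank hx.bot_lt
  rw [P.rank_bot_eq] at this
  omega

theorem rank_lt {x : P.Face} (hx : x ≠ ⊤) : P.rank x < n :=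
  P.rank_top_eq ▸ P.strictMono_rank hx.lt_top

theorem ne_bot_of_rank_nonneg {x : P.Face} (hx : 0 ≤ P.rank x) : x ≠ ⊥ := by
  rintro rfl
  rw [P.rank_bot_eq] at hx
  omega

theorem ne_top_of_rank_lt {x : P.Face} (hx : P.rank x < n) : x ≠ ⊤ := by
  rintro rfl
  exact hx.ne P.rank_top_eq

theorem eq_of_le_of_rank_le {a b : P.Face} (hab : a ≤ b) (hr : P.rank b ≤ P.rank a) : a = b :=
  hab.eq_of_not_lt fun hlt => (P.strictMono_rank hlt).not_ge hr

end Rank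

section Flag

variable {n : ℕ} {P : AbstractPolytope n} {Φ : Flag P.Face} {x y : P.Face}

theorem rank_le_rank_iff (hx : x ∈ Φ) (hy : y ∈ Φ) : P.rank x ≤ P.rank y ↔ x ≤ y := by
  refine ⟨fun hr => ?_, fun h => P.strictMono_rank.monotone h⟩
  exact (Φ.le_or_le hx hy).elim id fun hyx => (eq_of_le_of_rank_le hyx hr).ge

theorem rank_lt_rank_iff (hx : x ∈ Φ) (hy : y ∈ Φ) : P.rank x < P.rank y ↔ x < y :=
  lt_iff_lt_of_le_iff_le' (rank_le_rank_iff hy hx) (rank_le_rank_iff hx hy)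

theorem eq_of_rank_eq (hx : x ∈ Φ) (hy : y ∈ Φ) (hr : P.rank x = P.rank y) : x = y :=
  ((rank_le_rank_iff hx hy).1 hr.le).antisymm ((rank_le_rank_iff hy hx).1 hr.ge)

theorem exists_flag_mem (x : P.Face) : ∃ Φ : Flag P.Face, x ∈ Φ := by
  obtain ⟨Φ, hΦ⟩ := (IsChain.singleton (r := (· ≤ ·)) (a := x)).exists_subset_flag
  exact ⟨Φ, hΦ rfl⟩

theorem exists_flag_mem_of_le (hxy : x ≤ y) : ∃ Φ : Flag P.Face, x ∈ Φ ∧ y ∈ Φ := by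
  obtain ⟨Φ, hΦ⟩ := (IsChain.pair hxy).exists_subset_flag
  exact ⟨Φ, hΦ (by simp), hΦ (by simp)⟩

theorem exists_flag_of_mem_Icc {a b : P.Face} (hx : x ∈ Set.Icc a b) (hy : y ∈ Set.Icc a b)
    (hxy : x ≤ y ∨ y ≤ x) : ∃ Φ : Flag P.Face, a ∈ Φ ∧ x ∈ Φ ∧ y ∈ Φ ∧ b ∈ Φ := by
  have hchain : IsChain (· ≤ ·) ({a, b, x, y} : Set P.Face) := by
    have hpair : IsChain (· ≤ ·) ({x, y} : Set P.Face) :=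
      hxy.elim IsChain.pair fun h => Set.pair_comm y x ▸ IsChain.pair h
    refine (hpair.insert ?_).insert ?_
    · rintro z (rfl | rfl) -
      exacts [Or.inr hx.2, Or.inr hy.2]
    · rintro z (rfl | rfl | rfl) -
      exacts [Or.inl (hx.1.trans hx.2), Or.inl hx.1, Or.inl hy.1]
  obtain ⟨Φ, hΦ⟩ := hchain.exists_subset_flag
  exact ⟨Φ, hΦ (by simp), hΦ (by simp), hΦ (by simp), hΦ (by simp)⟩

theorem exists_mem_Icc_rank_eq {a b : P.Face} (hab : a ≤ b) {j : ℤ} (ha : P.rank a ≤ j)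
    (hb : j ≤ P.rank b) : ∃ c ∈ Set.Icc a b, P.rank c = j := by
  obtain ⟨Φ, haΦ, hbΦ⟩ := exists_flag_mem_of_le hab
  obtain ⟨c, hcΦ, rfl⟩ :=
    P.flag_ranks Φ j ((P.neg_one_le_rank a).trans ha) (hb.trans (P.rank_le b))
  exact ⟨c, ⟨(rank_le_rank_iff haΦ hcΦ).1 ha, (rank_le_rank_iff hcΦ hbΦ).1 hb⟩, rfl⟩

theorem existsUnique_mem_Ioo_ne {a b : P.Face} (hr : P.rank b = P.rank a + 2)
    (hx : x ∈ Set.Ioo a b) : ∃! y, y ∈ Set.Ioo a b ∧ y ≠ x := by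
  have hcard : Nat.card (Set.Ioo a b) = 2 := P.diamond a b (hx.1.trans hx.2) hr
  obtain ⟨y, hy, huniq⟩ := (Nat.card_eq_two_iff' ⟨x, hx⟩).1 hcard
  refine ⟨y, ⟨y.2, fun h => hy (Subtype.ext h)⟩, fun z hz => ?_⟩
  exact congrArg Subtype.val (huniq ⟨z, hz.1⟩ fun h => hz.2 (congrArg Subtype.val h))

end Flag

section Rigidity

variable {n : ℕ} {P : AbstractPolytope n} {a b x : P.Face} {g : P.Face → P.Face}

/-- A map of faces is rigid on the section `b/a` if fixing one flag of the section forces it to fix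
the whole section. -/
def RigidOn (P : AbstractPolytope n) (g : P.Face → P.Face) (a b : P.Face) : Prop :=
  ∀ Φ : Flag P.Face, a ∈ Φ → b ∈ Φ → (∀ x ∈ Φ, x ∈ Set.Icc a b → g x = x) →
    Set.EqOn g id (Set.Icc a b)

theorem rigidOn_of_rank_le (hr : P.rank b ≤ P.rank a + 1) : P.RigidOn g a b := by
  intro Φ ha hb hfix x hx
  rcases hx.1.eq_or_lt with rfl | hax
  · exact hfix a ha hx
  rcases hx.2.eq_or_lt with rfl | hxb
  · exact hfix x hb hx
  have := P.strictMono_rank hax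
  have := P.strictMono_rank hxb
  omega

theorem rigidOn_of_rank_eq_add_two
    (hg : ∀ x ∈ Set.Icc a b, ∀ y ∈ Set.Icc a b, g x ≤ g y ↔ x ≤ y)
    (hr : P.rank b = P.rank a + 2) : P.RigidOn g a b := by
  intro Φ ha hb hfix x hx
  have hab : a ≤ b := hx.1.trans hx.2
  have hga : g a = a := hfix a ha ⟨le_rfl, hab⟩
  have hgb : g b = b := hfix b hb ⟨hab, le_rfl⟩
  rcases hx.1.eq_or_lt with rfl | hax
  · exact hga
  rcases hx.2.eq_or_lt with rfl | hxb
  · exact hgb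
  obtain ⟨h, hhΦ, hrh⟩ := P.flag_ranks Φ (P.rank a + 1)
    (by have := P.neg_one_le_rank a; omega) (by have := P.rank_le b; omega)
  have hh : h ∈ Set.Ioo a b :=
    ⟨(rank_lt_rank_iff ha hhΦ).1 (by omega), (rank_lt_rank_iff hhΦ hb).1 (by omega)⟩
  have hgh : g h = h := hfix h hhΦ (Set.Ioo_subset_Icc_self hh)
  by_cases hxh : x = h
  · rw [hxh, hgh, id]
  have hlt : ∀ y ∈ Set.Icc a b, ∀ z ∈ Set.Icc a b, g y < g z ↔ y < z := fun y hy z hz =>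
    lt_iff_lt_of_le_iff_le' (hg z hz y hy) (hg y hy z hz)
  have hgx : g x ∈ Set.Ioo a b := by
    have hl := (hlt a ⟨le_rfl, hab⟩ x hx).2 hax
    have hu := (hlt x hx b ⟨hab, le_rfl⟩).2 hxb
    rw [hga] at hl
    rw [hgb] at hu
    exact ⟨hl, hu⟩
  have hgxh : g x ≠ h := by
    intro heq
    have hh' := Set.Ioo_subset_Icc_self hh
    exact hxh (((hg x hx h hh').1 (by rw [hgh, heq])).antisymm
      ((hg h hh' x hx).1 (by rw [hgh, heq])))
  exact (existsUnique_mem_Ioo_ne hr hh).unique ⟨hgx, hgxh⟩ ⟨⟨hax, hxb⟩, hxh⟩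

-- Strong connectivity carries the fixed part of the section from one proper face to the next.
theorem rigidOn_of_forall_mem_Ioo (hr : P.rank a + 3 ≤ P.rank b)
    (hlow : ∀ h ∈ Set.Ioo a b, P.RigidOn g a h) (hhigh : ∀ h ∈ Set.Ioo a b, P.RigidOn g h b) :
    P.RigidOn g a b := by
  have fixes_comparable : ∀ {h : P.Face} {Ψ : Flag P.Face}, h ∈ Set.Ioo a b →
      a ∈ Ψ → h ∈ Ψ → b ∈ Ψ → (∀ z ∈ Ψ, z ∈ Set.Icc a b → g z = z) →
      ∀ z ∈ Set.Icc a b, z ≤ h ∨ h ≤ z → g z = z := by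
    rintro h Ψ hh ha hhΨ hb hfix z hz (hzh | hhz)
    · exact hlow h hh Ψ ha hhΨ
        (fun w hw hwI => hfix w hw ⟨hwI.1, hwI.2.trans hh.2.le⟩) ⟨hz.1, hzh⟩
    · exact hhigh h hh Ψ hhΨ hb
        (fun w hw hwI => hfix w hw ⟨hh.1.le.trans hwI.1, hwI.2⟩) ⟨hhz, hz.2⟩
  intro Φ ha hb hfix x hx
  by_cases hxΦ : x ∈ Φ
  · exact hfix x hxΦ hx
  have hax : a < x := hx.1.lt_of_ne fun h => hxΦ (h ▸ ha)
  have hxb : x < b := hx.2.lt_of_ne fun h => hxΦ (h ▸ hb)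
  obtain ⟨h, hhΦ, hrh⟩ := P.flag_ranks Φ (P.rank a + 1)
    (by have := P.neg_one_le_rank a; omega) (by have := P.rank_le b; omega)
  have hah : a < h := (rank_lt_rank_iff ha hhΦ).1 (by omega)
  have hhb : h < b := (rank_lt_rank_iff hhΦ hb).1 (by omega)
  suffices ∀ z ∈ Set.Icc a b, z ≤ x ∨ x ≤ z → g z = z from this x hx (Or.inl le_rfl)
  have path := P.strongly_connected a b (hax.trans hxb) hr h x hah hhb hax hxb
  clear hx hxΦ hax hxb
  induction path with
  | refl => exact fixes_comparable ⟨hah, hhb⟩ ha hhΦ hb hfix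
  | @tail y z _ hstep hy =>
    obtain ⟨hay, hyb, haz, hzb, hyz⟩ := hstep
    obtain ⟨Ψ, haΨ, hyΨ, hzΨ, hbΨ⟩ :=
      exists_flag_of_mem_Icc ⟨hay.le, hyb.le⟩ ⟨haz.le, hzb.le⟩ hyz
    exact fixes_comparable ⟨haz, hzb⟩ haΨ hzΨ hbΨ
      fun w hw hwI => hy w hwI (Ψ.le_or_le hw hyΨ)

theorem rigidOn_of_le_iff_le
    (hg : ∀ x ∈ Set.Icc a b, ∀ y ∈ Set.Icc a b, g x ≤ g y ↔ x ≤ y) : P.RigidOn g a b := by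
  induction hd : (P.rank b - P.rank a).toNat using Nat.strong_induction_on generalizing a b with
  | _ d ih =>
  rcases le_or_gt (P.rank b) (P.rank a + 1) with hr | hr
  · exact rigidOn_of_rank_le hr
  rcases (show P.rank b = P.rank a + 2 ∨ P.rank a + 3 ≤ P.rank b by omega) with hr | hr
  · exact rigidOn_of_rank_eq_add_two hg hr
  refine rigidOn_of_forall_mem_Ioo hr (fun h hh => ?_) fun h hh => ?_
  all_goals
    have := P.strictMono_rank hh.1
    have := P.strictMono_rank hh.2
  · exact ih _ (by omega) (fun x hx y hy =>
      hg x ⟨hx.1, hx.2.trans hh.2.le⟩ y ⟨hy.1, hy.2.trans hh.2.le⟩) rfl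
  · exact ih _ (by omega) (fun x hx y hy =>
      hg x ⟨hh.1.le.trans hx.1, hx.2⟩ y ⟨hh.1.le.trans hy.1, hy.2⟩) rfl

end Rigidity

section Orbit

variable {n : ℕ} {P : AbstractPolytope n} {Φ Ψ : Flag P.Face} {x y : P.Face}

theorem rank_sub_rank_le {r : P.Face → ℤ} (hr : StrictMono r) {a b : P.Face} (hab : a ≤ b) :
    P.rank b - P.rank a ≤ r b - r a := by
  induction hd : (P.rank b - P.rank a).toNat generalizing a with
  | zero =>
    have := hr.monotone hab
    omega
  | succ d ih =>
    obtain ⟨c, ⟨hac, hcb⟩, hc⟩ :=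
      exists_mem_Icc_rank_eq hab (j := P.rank a + 1) (by omega) (by omega)
    have hlt : a < c := hac.lt_of_ne fun h => by
      rw [← h] at hc
      omega
    have := hr hlt
    have := ih hcb (by omega)
    omega

theorem rank_apply (f : P.Face ≃o P.Face) (x : P.Face) : P.rank (f x) = P.rank x := by
  have hf : StrictMono (P.rank ∘ f) := P.strictMono_rank.comp f.strictMono
  have hlow := rank_sub_rank_le hf (_root_.bot_le (a := x))
  have hhigh := rank_sub_rank_le hf (_root_.le_top (a := x))
  simp only [Function.comp_apply, map_bot, map_top] at hlow hhigh
  omega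

theorem sameOrbit_equivalence (P : AbstractPolytope n) : Equivalence P.SameOrbit where
  refl Φ := ⟨OrderIso.refl _, by simp⟩
  symm := by
    rintro Φ Ψ ⟨f, hf⟩
    exact ⟨f.symm, by rw [← hf, f.symm_image_image]⟩
  trans := by
    rintro Φ Ψ Χ ⟨f, hf⟩ ⟨g, hg⟩
    exact ⟨f.trans g, by rw [← hg, ← hf, Set.image_image]; rfl⟩

theorem apply_eq_of_image_eq {f : P.Face ≃o P.Face} (hf : f '' (Φ : Set P.Face) = Ψ)
    (hx : x ∈ Φ) (hy : y ∈ Ψ) (hr : P.rank x = P.rank y) : f x = y :=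
  eq_of_rank_eq (Φ := Ψ) (hf.subset ⟨x, hx, rfl⟩) hy ((rank_apply f x).trans hr)

theorem adjacentFlags_of_coe_eq (hx : x ∈ Φ) (hy : y ∉ Φ)
    (hΨ : (Ψ : Set P.Face) = insert y ((Φ : Set P.Face) \ {x})) : P.AdjacentFlags Φ Ψ := by
  have hxy : x ≠ y := fun h => hy (h ▸ hx)
  have hyΨ : y ∈ Ψ := hΨ.superset (Set.mem_insert _ _)
  refine ⟨fun h => hy (h ▸ hyΨ), Set.ncard_eq_one.2 ⟨x, ?_⟩, Set.ncard_eq_one.2 ⟨y, ?_⟩⟩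
  · ext z
    simp only [hΨ, Set.mem_sdiff, Set.mem_insert_iff, Set.mem_singleton_iff, SetLike.mem_coe]
    grind
  · ext z
    simp only [hΨ, Set.mem_sdiff, Set.mem_insert_iff, Set.mem_singleton_iff, SetLike.mem_coe]
    grind

theorem exists_exchange (hx : x ∈ Φ) (hbot : x ≠ ⊥) (htop : x ≠ ⊤) :
    ∃ y ∉ Φ, P.rank y = P.rank x ∧
      ∃ Ψ : Flag P.Face, (Ψ : Set P.Face) = insert y ((Φ : Set P.Face) \ {x}) := by
  have hr0 := rank_nonneg hbot
  have hrn := rank_lt htop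
  obtain ⟨a, ha, hra⟩ := P.flag_ranks Φ (P.rank x - 1) (by omega) (by omega)
  obtain ⟨b, hb, hrb⟩ := P.flag_ranks Φ (P.rank x + 1) (by omega) (by omega)
  have hax : a < x := (rank_lt_rank_iff ha hx).1 (by omega)
  have hxb : x < b := (rank_lt_rank_iff hx hb).1 (by omega)
  obtain ⟨y, ⟨⟨hay, hyb⟩, hyx⟩, -⟩ := existsUnique_mem_Ioo_ne (by omega) ⟨hax, hxb⟩
  have hry : P.rank y = P.rank x := by
    have := P.strictMono_rank hay
    have := P.strictMono_rank hyb
    omega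
  have hyΦ : y ∉ Φ := fun h => hyx (eq_of_rank_eq h hx hry)
  refine ⟨y, hyΦ, hry, ?_⟩
  have hchain : IsChain (· ≤ ·) (insert y ((Φ : Set P.Face) \ {x})) := by
    refine (Φ.chain_le.mono Set.sdiff_subset).insert ?_
    rintro z ⟨hz, hzx⟩ -
    have hne : P.rank z ≠ P.rank x := fun h => hzx (eq_of_rank_eq hz hx h)
    rcases hne.lt_or_gt with h | h
    · exact Or.inr (((rank_le_rank_iff hz ha).1 (by omega)).trans hay.le)
    · exact Or.inl (hyb.le.trans ((rank_le_rank_iff hb hz).1 (by omega)))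
  obtain ⟨Ψ, hΨ⟩ := hchain.exists_subset_flag
  refine ⟨Ψ, hΨ.antisymm' fun z hz => ?_⟩
  obtain ⟨w, hw, hrw⟩ := P.flag_ranks Φ (P.rank z) (P.neg_one_le_rank z) (P.rank_le z)
  have hyΨ : y ∈ Ψ := hΨ (Set.mem_insert _ _)
  by_cases hwx : w = x
  · rw [eq_of_rank_eq hz hyΨ (by rw [hry, ← hwx, hrw])]
    exact Set.mem_insert _ _
  · have hwΨ : w ∈ insert y ((Φ : Set P.Face) \ {x}) := Or.inr ⟨hw, hwx⟩
    rwa [eq_of_rank_eq hz (hΨ hwΨ) hrw.symm]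

end Orbit

section Chiral

variable {n : ℕ} {P : AbstractPolytope n} {Φ Ψ Χ : Flag P.Face} {x y : P.Face}

theorem IsChiral.sameOrbit_or_sameOrbit (hP : P.IsChiral) (hΦΨ : ¬ P.SameOrbit Φ Ψ)
    (Χ : Flag P.Face) : P.SameOrbit Φ Χ ∨ P.SameOrbit Ψ Χ := by
  obtain ⟨⟨Φ₁, Φ₂, -, horbits⟩, -⟩ := hP
  have hequiv := P.sameOrbit_equivalence
  rcases horbits Φ with hΦ | hΦ <;> rcases horbits Ψ with hΨ | hΨ <;>
    rcases horbits Χ with hΧ | hΧ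
  all_goals first
    | exact absurd (hequiv.trans hΦ (hequiv.symm hΨ)) hΦΨ
    | exact Or.inl (hequiv.trans hΦ (hequiv.symm hΧ))
    | exact Or.inr (hequiv.trans hΨ (hequiv.symm hΧ))

theorem IsChiral.sameOrbit_of_adjacent_adjacent (hP : P.IsChiral) (hΦΨ : P.AdjacentFlags Φ Ψ)
    (hΨΧ : P.AdjacentFlags Ψ Χ) : P.SameOrbit Φ Χ :=
  (hP.sameOrbit_or_sameOrbit (hP.2 Φ Ψ hΦΨ) Χ).resolve_right (hP.2 Ψ Χ hΨΧ)

theorem IsChiral.exists_apply_eq (hP : P.IsChiral) (hn : 2 ≤ n) (hr : P.rank x = P.rank y) :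
    ∃ γ : P.Face ≃o P.Face, γ x = y := by
  obtain ⟨Φ, hx⟩ := exists_flag_mem x
  obtain ⟨Ψ, hy⟩ := exists_flag_mem y
  by_cases hΦΨ : P.SameOrbit Φ Ψ
  · obtain ⟨γ, hγ⟩ := hΦΨ
    exact ⟨γ, apply_eq_of_image_eq hγ hx hy hr⟩
  -- Moving to an adjacent flag through `x` changes the orbit.
  obtain ⟨j, hj0, hjn, hjx⟩ : ∃ j : ℤ, 0 ≤ j ∧ j < n ∧ j ≠ P.rank x := by
    by_cases h : P.rank x = 0
    · exact ⟨1, by omega, by omega, by omega⟩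
    · exact ⟨0, by omega, by omega, by omega⟩
  obtain ⟨z, hz, hrz⟩ := P.flag_ranks Φ j (by omega) (by omega)
  obtain ⟨w, hw, -, Φ', hΦ'⟩ := exists_exchange hz (ne_bot_of_rank_nonneg (by omega))
    (ne_top_of_rank_lt (by omega))
  have hxΦ' : x ∈ Φ' := hΦ'.superset (Or.inr ⟨hx, fun h : x = z => hjx (h ▸ hrz.symm)⟩)
  obtain ⟨γ, hγ⟩ := (hP.sameOrbit_or_sameOrbit
    (hP.2 Φ Φ' (adjacentFlags_of_coe_eq hz hw hΦ')) Ψ).resolve_left hΦΨ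
  exact ⟨γ, apply_eq_of_image_eq hγ hxΦ' hy hr⟩

theorem IsChiral.apply_eq_self (hP : P.IsChiral) {f : P.Face ≃o P.Face} (hx : x ∈ Φ)
    (hfix : ∀ z ∈ Φ, z ≠ x → f z = z) : f x = x := by
  by_contra hfx
  have hfxΦ : f x ∉ Φ := fun h => hfx (eq_of_rank_eq h hx (rank_apply f x))
  have hrest : f '' ((Φ : Set P.Face) \ {x}) = (Φ : Set P.Face) \ {x} :=
    Set.EqOn.image_eq_self fun z hz => hfix z hz.1 hz.2
  have himage : f '' (Φ : Set P.Face) = insert (f x) ((Φ : Set P.Face) \ {x}) := by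
    conv_lhs => rw [← Set.insert_sdiff_self_of_mem (SetLike.mem_coe.2 hx)]
    rw [Set.image_insert_eq, hrest]
  exact hP.2 Φ (Flag.map f Φ) (adjacentFlags_of_coe_eq hx hfxΦ ((Flag.coe_map ..).trans himage))
    ⟨f, (Flag.coe_map ..).symm⟩

end Chiral

section EdgeFlip

variable {n : ℕ} {P : AbstractPolytope n} {e v G R x : P.Face} {θ θ' : P.Face → P.Face}

/-- `θ` restricts to an automorphism of the section `G/⊥` that exchanges the two vertices of the
edge `e` and fixes every face of `G/e`. In a regular polytope this is the distinguished generator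
moving only the vertex of a base flag. The values of `θ` off `Set.Iic G` are irrelevant. -/
structure IsEdgeFlip (P : AbstractPolytope n) (e G : P.Face) (θ : P.Face → P.Face) : Prop where
  rank_edge : P.rank e = 1
  edge_le : e ≤ G
  le_iff_le : ∀ x ≤ G, ∀ y ≤ G, θ x ≤ θ y ↔ x ≤ y
  fixes : ∀ x, e ≤ x → x ≤ G → θ x = x
  ne : ∀ v < e, P.rank v = 0 → θ v ≠ v

theorem exists_vertex_lt (he : P.rank e = 1) : ∃ v < e, P.rank v = 0 := by
  obtain ⟨v, ⟨-, hve⟩, hrv⟩ := exists_mem_Icc_rank_eq (P := P) (_root_.bot_le (a := e)) (j := 0)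
    (by rw [P.rank_bot_eq]; omega) (by omega)
  exact ⟨v, hve.lt_of_ne (by rintro rfl; omega), hrv⟩

theorem eq_bot_or_rank_eq_zero_of_lt (he : P.rank e = 1) (hx : x < e) :
    x = ⊥ ∨ P.rank x = 0 := by
  refine or_iff_not_imp_left.2 fun hbot => ?_
  have := rank_nonneg hbot
  have := P.strictMono_rank hx
  omega

theorem bot_lt_of_rank_eq_zero (hv : P.rank v = 0) : ⊥ < v :=
  (ne_bot_of_rank_nonneg hv.ge).bot_lt

theorem vertex_eq_of_ne (he : P.rank e = 1) {u w : P.Face} (hu : u < e) (hru : P.rank u = 0)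
    (hw : w < e) (hrw : P.rank w = 0) (hv : v < e) (hrv : P.rank v = 0) (huv : u ≠ v)
    (hwv : w ≠ v) : u = w := by
  have hr : P.rank e = P.rank ⊥ + 2 := by rw [P.rank_bot_eq, he]; rfl
  exact (existsUnique_mem_Ioo_ne hr ⟨bot_lt_of_rank_eq_zero hrv, hv⟩).unique
    ⟨⟨bot_lt_of_rank_eq_zero hru, hu⟩, huv⟩ ⟨⟨bot_lt_of_rank_eq_zero hrw, hw⟩, hwv⟩

namespace IsEdgeFlip

theorem mono (hθ : P.IsEdgeFlip e G θ) (heR : e ≤ R) (hRG : R ≤ G) : P.IsEdgeFlip e R θ where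
  rank_edge := hθ.rank_edge
  edge_le := heR
  le_iff_le x hx y hy := hθ.le_iff_le x (hx.trans hRG) y (hy.trans hRG)
  fixes x hex hxR := hθ.fixes x hex (hxR.trans hRG)
  ne := hθ.ne

theorem apply_le (hθ : P.IsEdgeFlip e G θ) (hx : x ≤ G) : θ x ≤ G := by
  have := (hθ.le_iff_le x hx G le_rfl).2 hx
  rwa [hθ.fixes G hθ.edge_le le_rfl] at this

theorem lt_iff_lt (hθ : P.IsEdgeFlip e G θ) {y : P.Face} (hx : x ≤ G) (hy : y ≤ G) :
    θ x < θ y ↔ x < y :=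
  lt_iff_lt_of_le_iff_le' (hθ.le_iff_le y hy x hx) (hθ.le_iff_le x hx y hy)

theorem apply_lt_edge (hθ : P.IsEdgeFlip e G θ) (hx : x < e) : θ x < e := by
  have := (hθ.lt_iff_lt (hx.le.trans hθ.edge_le) hθ.edge_le).2 hx
  rwa [hθ.fixes e le_rfl hθ.edge_le] at this

theorem apply_bot (hθ : P.IsEdgeFlip e G θ) : θ ⊥ = ⊥ := by
  obtain ⟨v, hve, hrv⟩ := exists_vertex_lt hθ.rank_edge
  have hlt := P.strictMono_rank ((hθ.lt_iff_lt (_root_.bot_le)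
    (hve.le.trans hθ.edge_le)).2 (bot_lt_of_rank_eq_zero hrv))
  have := P.strictMono_rank (hθ.apply_lt_edge hve)
  have := hθ.rank_edge
  by_contra hne
  have := rank_nonneg hne
  omega

theorem rank_apply_vertex (hθ : P.IsEdgeFlip e G θ) (hve : v < e) (hrv : P.rank v = 0) :
    P.rank (θ v) = 0 := by
  have hlt := (hθ.lt_iff_lt _root_.bot_le (hve.le.trans hθ.edge_le)).2
    (bot_lt_of_rank_eq_zero hrv)
  exact (eq_bot_or_rank_eq_zero_of_lt hθ.rank_edge (hθ.apply_lt_edge hve)).resolve_left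
    (ne_bot_of_gt hlt)

theorem apply_apply_vertex (hθ : P.IsEdgeFlip e G θ) (hθ' : P.IsEdgeFlip e G θ') (hve : v < e)
    (hrv : P.rank v = 0) : θ (θ' v) = v := by
  have hθ've := hθ'.apply_lt_edge hve
  have hrθ'v := hθ'.rank_apply_vertex hve hrv
  exact vertex_eq_of_ne hθ.rank_edge (hθ.apply_lt_edge hθ've) (hθ.rank_apply_vertex hθ've hrθ'v)
    hve hrv hθ've hrθ'v (hθ.ne _ hθ've hrθ'v) (hθ'.ne v hve hrv).symm

theorem apply_apply (hθ : P.IsEdgeFlip e G θ) (hθ' : P.IsEdgeFlip e G θ') (hx : x ≤ G) :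
    θ (θ' x) = x := by
  have hmono : ∀ y ∈ Set.Icc ⊥ G, ∀ z ∈ Set.Icc ⊥ G, θ (θ' y) ≤ θ (θ' z) ↔ y ≤ z :=
    fun y hy z hz => (hθ.le_iff_le _ (hθ'.apply_le hy.2) _ (hθ'.apply_le hz.2)).trans
      (hθ'.le_iff_le y hy.2 z hz.2)
  obtain ⟨Φ, he, hG⟩ := exists_flag_mem_of_le hθ.edge_le
  refine rigidOn_of_le_iff_le hmono Φ Φ.bot_mem hG (fun z hz hzI => ?_) ⟨_root_.bot_le, hx⟩
  by_cases hez : e ≤ z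
  · rw [hθ'.fixes z hez hzI.2, hθ.fixes z hez hzI.2]
  have hze : z < e := ((Φ.le_or_le he hz).resolve_left hez).lt_of_not_ge hez
  rcases eq_bot_or_rank_eq_zero_of_lt hθ.rank_edge hze with rfl | hrz
  · rw [hθ'.apply_bot, hθ.apply_bot]
  · exact hθ.apply_apply_vertex hθ' hze hrz

theorem apply_eq_apply (hθ : P.IsEdgeFlip e G θ) (hθ' : P.IsEdgeFlip e G θ') (hx : x ≤ G) :
    θ x = θ' x := by
  rw [← hθ.apply_apply hθ' (hθ'.apply_le hx), hθ'.apply_apply hθ' hx]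

end IsEdgeFlip

theorem IsChiral.not_isEdgeFlip (hP : P.IsChiral) (f : P.Face ≃o P.Face) :
    ¬ P.IsEdgeFlip e ⊤ f := by
  intro hf
  obtain ⟨v, hve, hrv⟩ := exists_vertex_lt hf.rank_edge
  obtain ⟨Φ, hv, he⟩ := exists_flag_mem_of_le hve.le
  refine hf.ne v hve hrv (hP.apply_eq_self hv fun z hz hzv => ?_)
  by_cases hez : e ≤ z
  · exact hf.fixes z hez _root_.le_top
  have hze : z < e := ((Φ.le_or_le he hz).resolve_left hez).lt_of_not_ge hez
  rcases eq_bot_or_rank_eq_zero_of_lt hf.rank_edge hze with rfl | hrz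
  · exact map_bot f
  · exact absurd (eq_of_rank_eq hz hv (hrz.trans hrv.symm)) hzv

end EdgeFlip

section RankOne

theorem not_isChiral_of_rank_one (P : AbstractPolytope 1) : ¬ P.IsChiral := by
  intro hP
  obtain ⟨v, -, hrv⟩ := exists_vertex_lt P.rank_top_eq
  have hmem : ∀ x, x ≠ ⊥ → x ≠ ⊤ → P.rank x = 0 := fun x hbot htop =>
    (eq_bot_or_rank_eq_zero_of_lt P.rank_top_eq htop.lt_top).resolve_left hbot
  have hv : v ∈ Set.Ioo ⊥ ⊤ :=
    ⟨bot_lt_of_rank_eq_zero hrv, (ne_top_of_rank_lt (by omega)).lt_top⟩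
  obtain ⟨w, ⟨hw, hwv⟩, huniq⟩ :=
    existsUnique_mem_Ioo_ne (by rw [P.rank_top_eq, P.rank_bot_eq]; rfl) hv
  have hrw : P.rank w = 0 := hmem w hw.1.ne' hw.2.ne
  let c : Bool → P.Face := fun b => bif b then v else w
  have hrc : ∀ b, P.rank (c b) = 0 := Bool.forall_bool.2 ⟨hrw, hrv⟩
  have hc : Function.Injective c := by
    intro a b hab
    cases a <;> cases b <;> first | rfl | exact absurd hab hwv | exact absurd hab.symm hwv
  have hcover : ∀ x, x ≠ ⊥ → x ≠ ⊤ → x ∈ Set.range c := fun x hbot htop => by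
    by_cases hxv : x = v
    · exact ⟨true, hxv.symm⟩
    · exact ⟨false, (huniq x ⟨⟨hbot.bot_lt, htop.lt_top⟩, hxv⟩).symm⟩
  obtain ⟨f, hf⟩ := exists_orderIso_of_proper_cover (c := c) (ρ := not) Bool.not_not
    (fun i j hij => by rw [hc (eq_of_le_of_rank_le hij (by rw [hrc, hrc]))])
    (fun i hi => absurd hi (ne_bot_of_rank_nonneg (hrc i).ge))
    (fun i hi => absurd hi (ne_top_of_rank_lt (by rw [hrc]; norm_num))) hcover
  refine hP.not_isEdgeFlip f (e := ⊤) ⟨P.rank_top_eq, le_rfl, fun _ _ _ _ => f.le_iff_le,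
    fun x hx _ => by rw [top_le_iff.1 hx, map_top], fun x hx hrx => ?_⟩
  obtain ⟨b, rfl⟩ := hcover x (ne_bot_of_rank_nonneg hrx.ge) hx.ne
  rw [hf]
  exact hc.ne (Bool.not_ne_self b)

end RankOne

section Rotation

variable {P : AbstractPolytope 2} {s : P.Face ≃o P.Face} {v e x : P.Face}

/-- `s` is a rotation of the polygon `P` by one step: it moves the vertex `v` to the other end of
the edge `e`, and `e` to the next edge. -/
structure IsRotation (P : AbstractPolytope 2) (s : P.Face ≃o P.Face) (v e : P.Face) : Prop where
  rank_vertex : P.rank v = 0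
  rank_edge : P.rank e = 1
  vertex_lt : v < e
  apply_vertex_lt : s v < e
  apply_vertex_ne : s v ≠ v
  apply_edge_ne : s e ≠ e

theorem IsChiral.exists_isRotation (hP : P.IsChiral) : ∃ s v e, P.IsRotation s v e := by
  obtain ⟨Φ, -⟩ := exists_flag_mem (⊥ : P.Face)
  obtain ⟨v, hv, hrv⟩ := P.flag_ranks Φ 0 (by norm_num) (by norm_num)
  obtain ⟨e, he, hre⟩ := P.flag_ranks Φ 1 (by norm_num) (by norm_num)
  obtain ⟨v', hv', hrv', Ψ, hΨ⟩ := exists_exchange hv (ne_bot_of_rank_nonneg (by omega))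
    (ne_top_of_rank_lt (by omega))
  have hv'Ψ : v' ∈ Ψ := hΨ.superset (Set.mem_insert _ _)
  have heΨ : e ∈ Ψ := hΨ.superset (Or.inr ⟨he, fun h : e = v => by rw [h] at hre; omega⟩)
  obtain ⟨e', he', hre', Χ, hΧ⟩ := exists_exchange heΨ (ne_bot_of_rank_nonneg (by omega))
    (ne_top_of_rank_lt (by omega))
  have hv'Χ : v' ∈ Χ := hΧ.superset (Or.inr ⟨hv'Ψ, fun h : v' = e => by rw [h] at hrv'; omega⟩)
  have he'Χ : e' ∈ Χ := hΧ.superset (Set.mem_insert _ _)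
  obtain ⟨s, hs⟩ := hP.sameOrbit_of_adjacent_adjacent (adjacentFlags_of_coe_eq hv hv' hΨ)
    (adjacentFlags_of_coe_eq heΨ he' hΧ)
  have hsv : s v = v' := apply_eq_of_image_eq hs hv hv'Χ hrv'.symm
  have hse : s e = e' := apply_eq_of_image_eq hs he he'Χ hre'.symm
  exact ⟨s, v, e, hrv, hre, (rank_lt_rank_iff hv he).1 (by omega),
    hsv ▸ (rank_lt_rank_iff hv'Ψ heΨ).1 (by omega),
    fun h => hv' (by rwa [← hsv, h]), fun h => he' (by rwa [← hse, h])⟩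

namespace IsRotation

theorem eq_or_eq_of_lt_edge (hs : P.IsRotation s v e) (hx : P.rank x = 0) (hxe : x < e) :
    x = v ∨ x = s v :=
  or_iff_not_imp_left.2 fun hxv => vertex_eq_of_ne hs.rank_edge hxe hx hs.apply_vertex_lt
    ((rank_apply s v).trans hs.rank_vertex) hs.vertex_lt hs.rank_vertex hxv hs.apply_vertex_ne

theorem eq_or_apply_eq_of_vertex_lt (hs : P.IsRotation s v e) (hx : P.rank x = 1)
    (hvx : v < x) : x = e ∨ s x = e := by
  refine or_iff_not_imp_left.2 fun hxe => ?_
  have lt_top_of_rank_eq_one : ∀ {y : P.Face}, P.rank y = 1 → y < ⊤ := fun hy =>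
    (ne_top_of_rank_lt (by rw [hy]; norm_num)).lt_top
  have hr : P.rank ⊤ = P.rank v + 2 := by rw [P.rank_top_eq, hs.rank_vertex]; rfl
  have hinv : P.rank (s.symm e) = 1 := (rank_apply s.symm e).trans hs.rank_edge
  refine s.eq_symm_apply.1 ((existsUnique_mem_Ioo_ne hr
    ⟨hs.vertex_lt, lt_top_of_rank_eq_one hs.rank_edge⟩).unique
    ⟨⟨hvx, lt_top_of_rank_eq_one hx⟩, hxe⟩
    ⟨⟨s.lt_symm_apply.2 hs.apply_vertex_lt, lt_top_of_rank_eq_one hinv⟩, ?_⟩)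
  exact fun h => hs.apply_edge_ne (s.symm_apply_eq.1 h).symm

end IsRotation

/-- The faces in the orbits of `v` and `e` under the powers of `s`. -/
def rotationOrbit (s : P.Face ≃o P.Face) (v e : P.Face) : ℤ ⊕ ℤ → P.Face :=
  Sum.elim (fun i => (s ^ i) v) fun i => (s ^ i) e

namespace IsRotation

theorem mem_range_of_comparable (hs : P.IsRotation s v e) {x y : P.Face}
    (hx : x ∈ Set.range (rotationOrbit s v e)) (hbot : ⊥ < y) (htop : y < ⊤)
    (hxy : x ≤ y ∨ y ≤ x) : y ∈ Set.range (rotationOrbit s v e) := by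
  by_cases hne : x = y
  · exact hne ▸ hx
  have hy0 := rank_nonneg hbot.ne'
  have hy2 := rank_lt htop.ne
  obtain ⟨i | i, rfl⟩ := hx <;> simp only [rotationOrbit, Sum.elim_inl, Sum.elim_inr] at hxy hne <;>
    obtain ⟨z, rfl⟩ := (s ^ i).surjective y <;> rw [rank_apply] at hy0 hy2 <;>
    simp only [OrderIso.le_iff_le, (s ^ i).injective.eq_iff] at hxy hne
  · have hvz : v < z := by
      refine (hxy.resolve_right fun h => hne ?_).lt_of_ne hne
      exact (eq_of_le_of_rank_le h (by rw [hs.rank_vertex]; exact hy0)).symm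
    have hrz := P.strictMono_rank hvz
    rw [hs.rank_vertex] at hrz
    rcases hs.eq_or_apply_eq_of_vertex_lt (by omega) hvz with rfl | rfl
    · exact ⟨.inr i, rfl⟩
    · refine ⟨.inr (i - 1), ?_⟩
      rw [rotationOrbit, Sum.elim_inr, zpow_apply_apply, sub_add_cancel]
  · have hze : z < e := by
      refine (hxy.resolve_left fun h => hne ?_).lt_of_ne (Ne.symm hne)
      exact eq_of_le_of_rank_le h (by rw [hs.rank_edge]; omega)
    have hrz := P.strictMono_rank hze
    rw [hs.rank_edge] at hrz
    rcases hs.eq_or_eq_of_lt_edge (by omega) hze with rfl | rfl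
    · exact ⟨.inl i, rfl⟩
    · exact ⟨.inl (i + 1), (zpow_apply_apply s i v).symm⟩

theorem mem_range_rotationOrbit (hs : P.IsRotation s v e) (hbot : x ≠ ⊥) (htop : x ≠ ⊤) :
    x ∈ Set.range (rotationOrbit s v e) := by
  have hv : v ∈ Set.Ioo ⊥ ⊤ := ⟨bot_lt_of_rank_eq_zero hs.rank_vertex, hs.vertex_lt.trans_le
    _root_.le_top⟩
  have path := P.strongly_connected ⊥ ⊤ (hv.1.trans hv.2)
    (by rw [P.rank_bot_eq, P.rank_top_eq]; norm_num) v x hv.1 hv.2 hbot.bot_lt htop.lt_top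
  clear hbot htop
  induction path with
  | refl => exact ⟨.inl 0, rfl⟩
  | tail _ hstep hx =>
    obtain ⟨-, -, hbot, htop, hxy⟩ := hstep
    exact hs.mem_range_of_comparable hx hbot htop hxy

theorem rank_rotationOrbit (hs : P.IsRotation s v e) (i : ℤ ⊕ ℤ) :
    P.rank (rotationOrbit s v e i) = Sum.elim (fun _ => 0) (fun _ => 1) i := by
  cases i
  · exact (rank_apply _ v).trans hs.rank_vertex
  · exact (rank_apply _ e).trans hs.rank_edge

theorem zpow_one_sub_apply_lt (hs : P.IsRotation s v e) {k : ℤ} (hk : (s ^ k) v < e) :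
    (s ^ (1 - k)) v < e := by
  rcases hs.eq_or_eq_of_lt_edge ((rank_apply _ v).trans hs.rank_vertex) hk with h | h
  · have hinv := congrArg (s ^ (1 - k)) h
    rw [zpow_apply_zpow_apply, sub_add_cancel] at hinv
    rw [← hinv, zpow_one]
    exact hs.apply_vertex_lt
  · have hinv := congrArg (s ^ (-k)) h
    rw [zpow_apply_zpow_apply, zpow_apply_apply, neg_add_cancel, neg_add_eq_sub] at hinv
    rw [← hinv]
    exact hs.vertex_lt

theorem zpow_one_sub_apply_le (hs : P.IsRotation s v e) {i j : ℤ}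
    (hij : (s ^ i) v ≤ (s ^ j) e) : (s ^ (1 - i)) v ≤ (s ^ (-j)) e := by
  have hle := (s ^ (-j)).le_iff_le.2 hij
  rw [zpow_apply_zpow_apply, zpow_apply_zpow_apply, neg_add_cancel, neg_add_eq_sub] at hle
  have hlt : (s ^ (i - j)) v < e := hle.lt_of_ne fun h => by
    have := congrArg P.rank h
    rw [rank_apply, zpow_zero, RelIso.one_apply, hs.rank_vertex, hs.rank_edge] at this
    omega
  have := (s ^ (-j)).le_iff_le.2 (hs.zpow_one_sub_apply_lt hlt).le
  rwa [zpow_apply_zpow_apply, show -j + (1 - (i - j)) = 1 - i by ring] at this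

-- The reflection in the edge `e` conjugates `s` to its inverse and takes `v` to `s v`.
theorem rotationOrbit_map_le (hs : P.IsRotation s v e) {i j : ℤ ⊕ ℤ}
    (hij : rotationOrbit s v e i ≤ rotationOrbit s v e j) :
    rotationOrbit s v e (i.map (1 - ·) (- ·)) ≤ rotationOrbit s v e (j.map (1 - ·) (- ·)) := by
  have hr := P.strictMono_rank.monotone hij
  have heq : P.rank (rotationOrbit s v e j) ≤ P.rank (rotationOrbit s v e i) →
    rotationOrbit s v e i = rotationOrbit s v e j := eq_of_le_of_rank_le hij
  rw [hs.rank_rotationOrbit, hs.rank_rotationOrbit] at hr heq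
  obtain i | i := i <;> obtain j | j := j <;>
    simp only [Sum.elim_inl, Sum.elim_inr, rotationOrbit, Sum.map_inl, Sum.map_inr] at hr heq hij ⊢
  · have := congrArg (s ^ (1 - i - j)) (heq le_rfl)
    rw [zpow_apply_zpow_apply, zpow_apply_zpow_apply, sub_add_cancel,
      show 1 - i - j + i = 1 - j by ring] at this
    exact this.ge
  · exact hs.zpow_one_sub_apply_le hij
  · omega
  · have := congrArg (s ^ (-i - j)) (heq le_rfl)
    rw [zpow_apply_zpow_apply, zpow_apply_zpow_apply, sub_add_cancel,
      show -i - j + i = -j by ring] at this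
    exact this.ge

theorem exists_isEdgeFlip (hs : P.IsRotation s v e) :
    ∃ f : P.Face ≃o P.Face, P.IsEdgeFlip e ⊤ f := by
  have hnonneg : ∀ i, 0 ≤ P.rank (rotationOrbit s v e i) := fun i => by
    rw [hs.rank_rotationOrbit]
    cases i <;> norm_num
  have hlt : ∀ i, P.rank (rotationOrbit s v e i) < 2 := fun i => by
    rw [hs.rank_rotationOrbit]
    cases i <;> norm_num
  obtain ⟨f, hf⟩ := exists_orderIso_of_proper_cover (c := rotationOrbit s v e)
    (ρ := Sum.map (1 - ·) (- ·))
    (fun i => by cases i <;> simp only [Sum.map_inl, Sum.map_inr, sub_sub_cancel, neg_neg])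
    (fun i j => hs.rotationOrbit_map_le)
    (fun i hi => absurd hi (ne_bot_of_rank_nonneg (hnonneg i)))
    (fun i hi => absurd hi (ne_top_of_rank_lt (hlt i))) fun x => hs.mem_range_rotationOrbit
  have hfv : f v = s v := by
    simpa [rotationOrbit] using hf (.inl 0)
  have hfsv : f (s v) = v := by
    simpa [rotationOrbit] using hf (.inl 1)
  have hfe : f e = e := by
    simpa [rotationOrbit] using hf (.inr 0)
  refine ⟨f, hs.rank_edge, _root_.le_top, fun _ _ _ _ => f.le_iff_le, fun x hex _ => ?_,
    fun x hxe hrx => ?_⟩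
  · by_cases htop : x = ⊤
    · rw [htop, map_top]
    · have := rank_lt htop
      rw [← eq_of_le_of_rank_le hex (by rw [hs.rank_edge]; omega), hfe]
  · rcases hs.eq_or_eq_of_lt_edge hrx hxe with rfl | rfl
    · exact hfv ▸ hs.apply_vertex_ne
    · rw [hfsv]
      exact hs.apply_vertex_ne.symm

end IsRotation

theorem not_isChiral_of_rank_two (P : AbstractPolytope 2) : ¬ P.IsChiral := by
  intro hP
  obtain ⟨s, v, e, hs⟩ := hP.exists_isRotation
  obtain ⟨f, hf⟩ := hs.exists_isEdgeFlip
  exact hP.not_isEdgeFlip f hf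

end Rotation

section Section

variable {m n : ℕ} {K : AbstractPolytope m} {P : AbstractPolytope n} {G : P.Face}
  {ε : K.Face ↪o P.Face}

/-- `ε` identifies `K` with the section `G/⊥` of `P`, preserving ranks. -/
structure IsSectionEmbedding (ε : K.Face ↪o P.Face) (G : P.Face) : Prop where
  range_eq : Set.range ε = Set.Iic G
  rank_apply : ∀ k, P.rank (ε k) = K.rank k

theorem IsSection.exists_isSectionEmbedding (h : P.IsSection K P.bot G) :
    ∃ ε : K.Face ↪o P.Face, IsSectionEmbedding ε G := by
  obtain ⟨-, φ, hφ⟩ := h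
  refine ⟨φ.toOrderEmbedding.trans (OrderEmbedding.subtype _), ?_, fun k => ?_⟩
  · ext x
    refine ⟨?_, fun hx => ⟨φ.symm ⟨x, P.bot_le x, hx⟩, ?_⟩⟩
    · rintro ⟨k, rfl⟩
      exact (φ k).2.2
    · exact congrArg Subtype.val (φ.apply_symm_apply _)
  · have := hφ k
    rw [P.rank_bot] at this
    exact this.trans (by ring)

namespace IsSectionEmbedding

theorem map (hε : IsSectionEmbedding ε G) (γ : P.Face ≃o P.Face) :
    IsSectionEmbedding (ε.trans γ.toOrderEmbedding) (γ G) where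
  range_eq := by
    rw [← γ.image_Iic, ← hε.range_eq, ← Set.range_comp]
    rfl
  rank_apply k := (AbstractPolytope.rank_apply γ (ε k)).trans (hε.rank_apply k)

theorem exists_apply_eq (hε : IsSectionEmbedding ε G) {x : P.Face} (hx : x ≤ G) : ∃ k, ε k = x :=
  hε.range_eq.superset hx

theorem le_of_isKMFlat (hε : IsSectionEmbedding ε G) {i j : ℤ} (hij : i ≤ j)
    (hflat : K.IsKMFlat i j) {x y : P.Face} (hx : x ≤ G) (hy : y ≤ G) (hrx : P.rank x = i)
    (hry : P.rank y = j) : x ≤ y := by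
  obtain ⟨a, rfl⟩ := hε.exists_apply_eq hx
  obtain ⟨b, rfl⟩ := hε.exists_apply_eq hy
  rw [hε.rank_apply] at hrx hry
  rcases hflat a b hrx hry with hab | hba
  · exact ε.le_iff_le.2 hab
  · rw [eq_of_le_of_rank_le hba (by omega)]

end IsSectionEmbedding

theorem IsChiral.exists_isSectionEmbedding (hP : P.IsChiral) (hn : 2 ≤ n)
    {ε : K.Face ↪o P.Face} {A B : P.Face} (hε : IsSectionEmbedding ε A)
    (hr : P.rank A = P.rank B) : ∃ ε' : K.Face ↪o P.Face, IsSectionEmbedding ε' B := by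
  obtain ⟨γ, rfl⟩ := hP.exists_apply_eq hn hr
  exact ⟨_, hε.map γ⟩

theorem IsRegular.exists_isEdgeFlip (hK : K.IsRegular) {e : K.Face} (he : K.rank e = 1) :
    ∃ g : K.Face ≃o K.Face, K.IsEdgeFlip e ⊤ g := by
  obtain ⟨v, hve, hrv⟩ := exists_vertex_lt he
  obtain ⟨Φ, hvΦ, heΦ⟩ := exists_flag_mem_of_le hve.le
  obtain ⟨v', hv', hrv', Ψ, hΨ⟩ := exists_exchange hvΦ (ne_bot_of_rank_nonneg hrv.ge)
    (hve.trans_le _root_.le_top).ne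
  obtain ⟨g, hg⟩ := hK Φ Ψ
  have hv'Ψ : v' ∈ Ψ := hΨ.superset (Set.mem_insert _ _)
  have heΨ : e ∈ Ψ := hΨ.superset (Or.inr ⟨heΦ, hve.ne'⟩)
  have hgv : g v = v' := apply_eq_of_image_eq hg hvΦ hv'Ψ hrv'.symm
  have hvv' : v' ≠ v := fun h => hv' (h ▸ hvΦ)
  refine ⟨g, he, _root_.le_top, fun _ _ _ _ => g.le_iff_le, fun x hex hx => ?_, fun w hwe hrw => ?_⟩
  · refine rigidOn_of_le_iff_le (fun _ _ _ _ => g.le_iff_le) Φ heΦ Φ.top_mem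
      (fun z hz hzI => ?_) ⟨hex, hx⟩
    have hzΨ : z ∈ Ψ := hΨ.superset (Or.inr ⟨hz, (hve.trans_le hzI.1).ne'⟩)
    exact apply_eq_of_image_eq hg hz hzΨ rfl
  · by_cases hwv : w = v
    · rw [hwv, hgv]
      exact hvv'
    have hv'e : v' < e := (rank_lt_rank_iff hv'Ψ heΨ).1 (by omega)
    have hwv' : w = v' :=
      vertex_eq_of_ne he hwe hrw hv'e (hrv'.trans hrv) hve hrv hwv hvv'
    rw [hwv', ← hgv]
    exact fun h => hvv' (hgv.symm.trans (g.injective h))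

theorem IsSectionEmbedding.exists_isEdgeFlip (hε : IsSectionEmbedding ε G) (hK : K.IsRegular)
    {e : P.Face} (he : P.rank e = 1) (heG : e ≤ G) : ∃ θ, P.IsEdgeFlip e G θ := by
  obtain ⟨e, rfl⟩ := hε.exists_apply_eq heG
  rw [hε.rank_apply] at he
  obtain ⟨g, hg⟩ := hK.exists_isEdgeFlip he
  have hθ : ∀ k, Function.extend ε (ε ∘ g) id (ε k) = ε (g k) := ε.injective.extend_apply _ _
  refine ⟨Function.extend ε (ε ∘ g) id, (hε.rank_apply e).trans he, heG,
    fun x hx y hy => ?_, fun x hex hx => ?_, fun v hve hrv => ?_⟩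
  · obtain ⟨a, rfl⟩ := hε.exists_apply_eq hx
    obtain ⟨b, rfl⟩ := hε.exists_apply_eq hy
    rw [hθ, hθ, ε.le_iff_le, g.le_iff_le, ε.le_iff_le]
  · obtain ⟨a, rfl⟩ := hε.exists_apply_eq hx
    rw [hθ, hg.fixes a (ε.le_iff_le.1 hex) _root_.le_top]
  · obtain ⟨a, rfl⟩ := hε.exists_apply_eq (hve.le.trans heG)
    rw [hε.rank_apply] at hrv
    rw [hθ]
    exact ε.injective.ne (hg.ne a (ε.lt_iff_lt.1 hve) hrv)

end Section

section Gluing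

variable {n : ℕ} {P : AbstractPolytope n} {e x A B G : P.Face}

/-- `A` and `B` are facets with a common ridge (a face of rank `n - 2`) above `x`. -/
def FacetAdj (P : AbstractPolytope n) (x A B : P.Face) : Prop :=
  P.IsFacet A ∧ P.IsFacet B ∧ ∃ R, P.rank R = (n : ℤ) - 2 ∧ x ≤ R ∧ R ≤ A ∧ R ≤ B

theorem FacetAdj.mono {y : P.Face} (hxy : x ≤ y) (h : P.FacetAdj y A B) : P.FacetAdj x A B := by
  obtain ⟨hA, hB, R, hR, hyR, hRAB⟩ := h
  exact ⟨hA, hB, R, hR, hxy.trans hyR, hRAB⟩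

theorem IsFacet.ne_top (hG : P.IsFacet G) : G ≠ ⊤ :=
  ne_top_of_rank_lt (by rw [hG]; omega)

theorem exists_isFacet_ge (hx : x ≠ ⊤) : ∃ G, P.IsFacet G ∧ x ≤ G := by
  have := rank_lt hx
  obtain ⟨G, hG, hr⟩ := exists_mem_Icc_rank_eq (P := P) (_root_.le_top (a := x)) (j := n - 1)
    (by omega) (by rw [P.rank_top_eq]; omega)
  exact ⟨G, hr, hG.1⟩

theorem facetAdj_connected (hA : P.IsFacet A) (hB : P.IsFacet B) (hxA : x ≤ A) (hxB : x ≤ B) :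
    Relation.ReflTransGen (P.FacetAdj x) A B := by
  induction hd : (n - P.rank x).toNat using Nat.strong_induction_on generalizing x A B with
  | _ d ih =>
  have hrA : P.rank A = n - 1 := hA
  have hrB : P.rank B = n - 1 := hB
  rcases (show n - 1 ≤ P.rank x ∨ P.rank x = n - 2 ∨ P.rank x + 3 ≤ n by omega) with hr | hr | hr
  · have hAx := eq_of_le_of_rank_le hxA (by omega)
    have hBx := eq_of_le_of_rank_le hxB (by omega)
    rw [← hAx, ← hBx]
  · exact .single ⟨hA, hB, x, hr, le_rfl, hxA, hxB⟩
  have lt_facet : ∀ {G}, P.IsFacet G → x ≤ G → x < G := fun {G} (hG : P.rank G = n - 1) hxG =>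
    hxG.lt_of_ne fun h => by rw [← h] at hG; omega
  have path := P.strongly_connected x ⊤ ((lt_facet hA hxA).trans hA.ne_top.lt_top)
    (by rwa [P.rank_top_eq]) A B (lt_facet hA hxA) hA.ne_top.lt_top (lt_facet hB hxB)
    hB.ne_top.lt_top
  suffices ∀ G, P.IsFacet G → B ≤ G → Relation.ReflTransGen (P.FacetAdj x) A G from
    this B hB le_rfl
  clear hB hxB hrB
  induction path with
  | refl =>
    intro G (hG : P.rank G = n - 1) hAG
    rw [eq_of_le_of_rank_le hAG (by omega)]
  | @tail H H' _ hstep hH =>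
    obtain ⟨-, hHtop, hxH', -, hHH' | hH'H⟩ := hstep <;> intro G hG hH'G
    · exact hH G hG (hHH'.trans hH'G)
    obtain ⟨D, hD, hHD⟩ := exists_isFacet_ge hHtop.ne
    have := P.strictMono_rank hxH'
    have hDG : Relation.ReflTransGen (P.FacetAdj x) D G :=
      Relation.ReflTransGen.mono (fun _ _ => FacetAdj.mono hxH'.le) _ _
        (ih _ (by omega) hD hG (hH'H.trans hHD) hH'G rfl)
    exact (hH D hD hHD).trans hDG

theorem le_facet_of_le_ridges {a : P.Face}
    (hflat : ∀ G, P.IsFacet G → a ≤ G → ∀ R ≤ G, P.rank R = (n : ℤ) - 2 → a ≤ R)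
    (hA : P.IsFacet A) (haA : a ≤ A) (hB : P.IsFacet B) : a ≤ B := by
  have path := facetAdj_connected hA hB (_root_.bot_le (a := A)) _root_.bot_le
  clear hB
  induction path with
  | refl => exact haA
  | tail _ hstep haC =>
    obtain ⟨hC, -, R, hR, -, hRC, hRD⟩ := hstep
    exact (hflat _ hC haC R hRC hR).trans hRD

theorem edgeFlip_apply_eq {θ : P.Face → P.Face → P.Face}
    (hθ : ∀ G, P.IsFacet G → P.IsEdgeFlip e G (θ G))
    (hridge : ∀ R, P.rank R = (n : ℤ) - 2 → e ≤ R)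
    (hA : P.IsFacet A) (hB : P.IsFacet B) (hxA : x ≤ A) (hxB : x ≤ B) : θ A x = θ B x := by
  have path := facetAdj_connected hA hB hxA hxB
  clear hB hxB
  induction path with
  | refl => rfl
  | tail _ hstep hAC =>
    obtain ⟨hC, hD, R, hR, hxR, hRC, hRD⟩ := hstep
    have heR := hridge R hR
    exact hAC.trans (((hθ _ hC).mono heR hRC).apply_eq_apply ((hθ _ hD).mono heR hRD) hxR)

theorem exists_isEdgeFlip_of_forall_facet
    (hflip : ∀ G, P.IsFacet G → ∃ θ, P.IsEdgeFlip e G θ)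
    (hridge : ∀ R, P.rank R = (n : ℤ) - 2 → e ≤ R) :
    ∃ f : P.Face ≃o P.Face, P.IsEdgeFlip e ⊤ f := by
  choose! θ hθ using hflip
  let ρ (p : {p : P.Face × P.Face // P.IsFacet p.1 ∧ p.2 ≤ p.1}) :
      {p : P.Face × P.Face // P.IsFacet p.1 ∧ p.2 ≤ p.1} :=
    ⟨(p.1.1, θ p.1.1 p.1.2), p.2.1, (hθ _ p.2.1).apply_le p.2.2⟩
  obtain ⟨f, hf⟩ := exists_orderIso_of_proper_cover (c := fun p => p.1.2) (ρ := ρ)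
    (fun ⟨⟨G, x⟩, hG, hx⟩ => Subtype.ext (Prod.ext rfl ((hθ G hG).apply_apply (hθ G hG) hx)))
    (fun ⟨⟨A, x⟩, hA, hx⟩ ⟨⟨B, y⟩, hB, hy⟩ hxy =>
      (edgeFlip_apply_eq hθ hridge hA hB hx (hxy.trans hy)).trans_le
        (((hθ B hB).le_iff_le x (hxy.trans hy) y hy).2 hxy))
    (fun ⟨⟨G, _⟩, hG, _⟩ hbot => hbot ▸ (hθ G hG).apply_bot)
    (fun ⟨⟨G, x⟩, hG, hx⟩ htop => absurd (top_le_iff.1 (htop ▸ hx)) hG.ne_top)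
    (fun x _ htop =>
      let ⟨G, hG, hxG⟩ := exists_isFacet_ge htop
      ⟨⟨(G, x), hG, hxG⟩, rfl⟩)
  have hfθ : ∀ {G}, P.IsFacet G → ∀ {x}, x ≤ G → f x = θ G x := fun hG _ hx =>
    hf ⟨(_, _), hG, hx⟩
  obtain ⟨G, hG, -⟩ := exists_isFacet_ge P.bot_ne_top
  have hflipG := hθ G hG
  refine ⟨f, hflipG.rank_edge, _root_.le_top, fun _ _ _ _ => f.le_iff_le, fun x hex _ => ?_,
    fun v hve hrv => ?_⟩
  · by_cases htop : x = ⊤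
    · rw [htop, map_top]
    obtain ⟨A, hA, hxA⟩ := exists_isFacet_ge htop
    rw [hfθ hA hxA, (hθ A hA).fixes x hex hxA]
  · rw [hfθ hG (hve.le.trans hflipG.edge_le)]
    exact hflipG.ne v hve hrv

theorem exists_isEdgeFlip_of_flat_regular_facets {K : AbstractPolytope n}
    {P : AbstractPolytope (n + 1)} (hn : 2 ≤ n) (hreg : K.IsRegular)
    (hflat : K.IsKMFlat 1 ((n : ℤ) - 1))
    (hfacets : ∀ G, P.IsFacet G → ∃ ε : K.Face ↪o P.Face, IsSectionEmbedding ε G) :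
    ∃ (e : P.Face) (f : P.Face ≃o P.Face), P.IsEdgeFlip e ⊤ f := by
  obtain ⟨F, hF, -⟩ := exists_isFacet_ge P.bot_ne_top
  have hrF : P.rank F = n := hF.trans (by push_cast; ring)
  obtain ⟨e, ⟨-, heF⟩, he⟩ := exists_mem_Icc_rank_eq (P := P) (_root_.bot_le (a := F)) (j := 1)
    (by rw [P.rank_bot_eq]; omega) (by omega)
  have hflat' : ∀ G, P.IsFacet G → e ≤ G → ∀ R ≤ G, P.rank R = ((n + 1 : ℕ) : ℤ) - 2 → e ≤ R :=
    fun G hG heG R hRG hR => by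
      obtain ⟨ε, hε⟩ := hfacets G hG
      exact hε.le_of_isKMFlat (by omega) hflat heG hRG he (by omega)
  have hfacet : ∀ G, P.IsFacet G → e ≤ G := fun G hG => le_facet_of_le_ridges hflat' hF heF hG
  have hridge : ∀ R, P.rank R = ((n + 1 : ℕ) : ℤ) - 2 → e ≤ R := fun R hR => by
    obtain ⟨G, hG, hRG⟩ := exists_isFacet_ge (ne_top_of_rank_lt (x := R) (by omega))
    exact hflat' G hG (hfacet G hG) R hRG hR
  refine ⟨e, exists_isEdgeFlip_of_forall_facet (fun G hG => ?_) hridge⟩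
  obtain ⟨ε, hε⟩ := hfacets G hG
  exact hε.exists_isEdgeFlip hreg he (hfacet G hG)

end Gluing

end AbstractPolytope

theorem no_chiral_with_one_flat_regular_facet_general
    (n : ℕ) (K : AbstractPolytope n) (hreg : K.IsRegular)
    (hflat : K.IsKMFlat 1 ((n : ℤ) - 1))
    (P : AbstractPolytope (n + 1)) (hchiral : P.IsChiral)
    (F : P.Face) (hF : P.IsFacet F) :
    ¬ P.IsSection K P.bot F := by
  intro hK
  obtain rfl | rfl | hn : n = 0 ∨ n = 1 ∨ 2 ≤ n := by omega
  · exact P.not_isChiral_of_rank_one hchiral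
  · exact P.not_isChiral_of_rank_two hchiral
  obtain ⟨ε, hε⟩ := hK.exists_isSectionEmbedding
  obtain ⟨e, f, hf⟩ := AbstractPolytope.exists_isEdgeFlip_of_flat_regular_facets hn hreg hflat
    fun G hG => hchiral.exists_isSectionEmbedding (by omega) hε (hF.trans hG.symm)
  exact hchiral.not_isEdgeFlip f hf

/-- If `K` is a regular `n`-polytope that is `(1, n-1)`-flat, then
no finite chiral `(n+1)`-polytope has a facet isomorphic to `K`. -/
theorem no_chiral_with_one_flat_regular_facet
    (n : ℕ) (K : AbstractPolytope n) (hreg : K.IsRegular)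
    (hflat : K.IsKMFlat 1 ((n : ℤ) - 1))
    (P : AbstractPolytope (n + 1)) (hfin : Finite P.Face) (hchiral : P.IsChiral)
    (F : P.Face) (hF : P.IsFacet F) :
    ¬ P.IsSection K P.bot F :=
  no_chiral_with_one_flat_regular_facet_general n K hreg hflat P hchiral F hF
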